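/- Let k be a field and let F : C ⥤ D be an exact k-linear fully faithful functor between abelian k-linear categories. Assume that every object of C has finite length and finite-dimensional endomorphism algebra over k, and that F sends semisimple objects of C to semisimple objects of D. Then the essential image of F is closed under subobjects and quotients in D: if X is an object of C and Y is a subobject (or quotient) of F(X) in D, then Y is isomorphic to F(Z) for some object Z of C. -/

import Mathlib

/-!
An object of finite length is an iterated extension of simple objects, so it is enough to show that
the objects `X` for which all subobjects of `F.obj X` lie in the essential image of `F` include the
simple objects and are closed under extensions.

If `S` is simple, then `F.obj S` is semisimple and its nonzero endomorphisms are invertible, so it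
is simple too. For an extension `0 ⟶ A ⟶ X ⟶ B ⟶ 0` in the target category, with `X` in the
essential image, and for `Y ≤ X`, the objects `Y ⊓ A ≤ A` and `Y / (Y ⊓ A) ≤ B` lie in the essential
image, which is closed under kernels and cokernels. Therefore it contains
`X / Y = (X / (Y ⊓ A)) / (Y / (Y ⊓ A))`, and then also `Y`, the kernel of `X ⟶ X / Y`. Finally, a
quotient of `F.obj X` is the cokernel of a morphism between objects of the essential image.
-/

open CategoryTheory CategoryTheory.Limits

/-- An object of an abelian category is semisimple if it is isomorphic to a finite
direct sum of simple objects. -/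
def IsSemisimpleObj {C : Type*} [Category C] [Abelian C] (X : C) : Prop :=
  ∃ (n : ℕ) (f : Fin n → C), (∀ i, Simple (f i)) ∧
    letI : CategoryTheory.Limits.HasFiniteBiproducts C :=
      CategoryTheory.Limits.HasFiniteBiproducts.of_hasFiniteProducts
    letI : CategoryTheory.Limits.HasBiproductsOfShape (Fin n) C :=
      CategoryTheory.Limits.HasFiniteBiproducts.out n
    Nonempty (X ≅ ⨁ f)

/-- An object of an abelian category has finite length if there is a bound on the length
of strict chains of subobjects. -/
def HasFiniteLengthObj {C : Type*} [Category C] [Abelian C] (X : C) : Prop :=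
  ∃ N : ℕ, ∀ s : Fin (N + 1) → Subobject X, ¬ StrictMono s

section KernelsAndCokernels

variable {C : Type*} [Category C]

lemma isClosedUnderKernels_of_isClosedUnderLimitsOfShape [HasZeroMorphisms C]
    (P : ObjectProperty C) [P.IsClosedUnderLimitsOfShape WalkingParallelPair] :
    P.IsClosedUnderKernels where
  kernels_le := by
    rintro _ ⟨f, k, hk, hX, hY⟩
    exact P.prop_of_isLimit hk (by rintro (_ | _) <;> assumption)

lemma isClosedUnderCokernels_of_isClosedUnderColimitsOfShape [HasZeroMorphisms C]
    (P : ObjectProperty C) [P.IsClosedUnderColimitsOfShape WalkingParallelPair] :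
    P.IsClosedUnderCokernels where
  cokernels_le := by
    rintro _ ⟨f, k, hk, hX, hY⟩
    exact P.prop_of_isColimit hk (by rintro (_ | _) <;> assumption)

variable [Abelian C] (P : ObjectProperty C)

lemma prop_cokernel_of_prop_cokernel_comp [P.IsClosedUnderCokernels] {X Y Z : C}
    (f : X ⟶ Y) (g : Y ⟶ Z) (hf : P (cokernel f)) (hfg : P (cokernel (f ≫ g))) :
    P (cokernel g) :=
  let S : ShortComplex C :=
    .mk (cokernel.map f (f ≫ g) (𝟙 X) g (by simp)) (cokernel.map (f ≫ g) g f (𝟙 Z) (by simp))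
      ((kernelCokernelCompSequence_exact f g).zero 3)
  have hS : S.Exact := (kernelCokernelCompSequence_exact f g).exact 3
  have : Epi S.g := inferInstanceAs (Epi ((kernelCokernelCompSequence f g).map' 4 5))
  (P.prop_of_isColimit_cokernelCofork hS.gIsCokernel hf hfg :)

lemma prop_of_mono_of_prop_cokernel [P.IsClosedUnderKernels] {X Y : C} (f : X ⟶ Y) [Mono f]
    (hY : P Y) (hf : P (cokernel f)) : P X :=
  P.prop_of_isLimit_kernelFork (Abelian.monoIsKernelOfCokernel _ (cokernelIsCokernel f)) hY hf

lemma prop_of_epi_of_prop_kernel [P.IsClosedUnderCokernels] {X Y : C} (f : X ⟶ Y) [Epi f]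
    (hX : P X) (hf : P (kernel f)) : P Y :=
  P.prop_of_isColimit_cokernelCofork (Abelian.epiIsCokernelOfKernel _ (kernelIsKernel f)) hf hX

end KernelsAndCokernels

/-- The largest property of objects contained in `P` and closed under subobjects: an object
satisfies it when all its subobjects satisfy `P`. Subobjects are represented by arbitrary
monomorphisms, so that no invariance of `P` under isomorphisms is required. -/
def subobjectCore {C : Type*} [Category C] (P : ObjectProperty C) : ObjectProperty C :=
  fun X ↦ ∀ ⦃Y : C⦄ (f : Y ⟶ X) [Mono f], P Y

namespace subobjectCore

variable {C : Type*} [Category C] (P : ObjectProperty C)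

instance : (subobjectCore P).IsClosedUnderSubobjects where
  prop_of_mono f _ hY _ g _ := hY (g ≫ f)

lemma le : subobjectCore P ≤ P :=
  fun X hX ↦ hX (𝟙 X)

instance [HasZeroMorphisms C] [P.ContainsZero] [P.IsClosedUnderIsomorphisms] :
    (subobjectCore P).ContainsZero where
  exists_zero := by
    obtain ⟨Z, hZ, -⟩ := P.exists_prop_of_containsZero
    exact ⟨Z, hZ, fun _ f _ ↦ P.prop_of_isZero (hZ.of_mono f)⟩

variable {P} in
lemma of_simple [HasZeroMorphisms C] [P.ContainsZero] [P.IsClosedUnderIsomorphisms]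
    {S : C} [Simple S] (hS : P S) : subobjectCore P S := by
  intro Y f _
  by_cases hf : f = 0
  · exact P.prop_of_isZero (IsZero.of_mono_eq_zero f hf)
  · have : IsIso f := isIso_of_mono_of_nonzero hf
    exact P.prop_of_iso (asIso f).symm hS

variable [Abelian C]

variable {P} in
lemma prop_X₂_of_shortExact [P.IsClosedUnderKernels] [P.IsClosedUnderCokernels]
    {S : ShortComplex C} (hS : S.ShortExact) (h₁ : subobjectCore P S.X₁) (h₂ : P S.X₂)
    (h₃ : subobjectCore P S.X₃) : subobjectCore P S.X₂ := by
  intro Y f _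
  have := hS.mono_f
  have inter : P (kernel (f ≫ S.g)) := by
    let toX₁ : kernel (f ≫ S.g) ⟶ S.X₁ := hS.exact.lift (kernel.ι (f ≫ S.g) ≫ f) (by simp)
    have fac : toX₁ ≫ S.f = kernel.ι (f ≫ S.g) ≫ f := hS.exact.lift_f _ _
    have : Mono toX₁ := mono_of_mono_fac fac
    exact h₁ toX₁
  have coimage : P (cokernel (kernel.ι (f ≫ S.g))) :=
    h₃ (Abelian.factorThruCoimage (f ≫ S.g))
  have quotient : P (cokernel (kernel.ι (f ≫ S.g) ≫ f)) := P.prop_cokernel _ inter h₂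
  exact prop_of_mono_of_prop_cokernel P f h₂
    (prop_cokernel_of_prop_cokernel_comp P _ f coimage quotient)

variable {P} in
lemma prop_of_epi [P.IsClosedUnderCokernels] {X Y : C} (f : X ⟶ Y) [Epi f]
    (hX : subobjectCore P X) : P Y :=
  prop_of_epi_of_prop_kernel P f (le P X hX) (hX (kernel.ι f))

end subobjectCore

section FiniteLength

variable {C : Type*} [Category C] [Abelian C]

lemma simple_cokernel_of_isCoatom {X Y : C} (i : X ⟶ Y) [Mono i]
    (hi : IsCoatom (Subobject.mk i)) : Simple (cokernel i) := by
  refine simple_of_cosimple _ fun {Z} f _ ↦ ⟨?_, fun hf ↦ ?_⟩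
  · rintro _ rfl
    have : Epi i := Preadditive.epi_of_cokernel_zero
      (by rw [← cancel_mono (0 : cokernel i ⟶ Z), comp_zero, comp_zero])
    have : IsIso i := isIso_of_mono_of_epi i
    exact hi.ne_top ((Subobject.isIso_iff_mk_eq_top i).1 this)
  · let K := Subobject.mk (kernel.ι (cokernel.π i ≫ f))
    have le_K : Subobject.mk i ≤ K :=
      Subobject.mk_le_mk_of_comm (kernel.lift _ i (by simp)) (by simp)
    have K_ne_top : K ≠ ⊤ := by
      intro hK
      have : IsIso (kernel.ι (cokernel.π i ≫ f)) := (Subobject.isIso_iff_mk_eq_top _).2 hK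
      have : cokernel.π i ≫ f = 0 := by
        rw [← cancel_epi (kernel.ι (cokernel.π i ≫ f)), kernel.condition, comp_zero]
      exact hf (by rw [← cancel_epi (cokernel.π i), this, comp_zero])
    have K_le : K ≤ Subobject.mk i := ((hi.le_iff.1 le_K).resolve_left K_ne_top).le
    have kernel_ι_comp_π : kernel.ι (cokernel.π i ≫ f) ≫ cokernel.π i = 0 := by
      rw [← Subobject.ofMkLEMk_comp K_le, Category.assoc, cokernel.condition, comp_zero]
    let r := Abelian.epiDesc (cokernel.π i ≫ f) (cokernel.π i) kernel_ι_comp_π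
    have retraction : f ≫ r = 𝟙 _ := by
      rw [← cancel_epi (cokernel.π i), ← Category.assoc, Abelian.comp_epiDesc, Category.comp_id]
    have : Mono f := mono_of_mono_fac retraction
    exact isIso_of_mono_of_epi f

lemma simple_cokernel_ofLE_of_covBy {X : C} {A B : Subobject X} (h : A ⋖ B) :
    Simple (cokernel (A.ofLE B h.le)) := by
  refine simple_cokernel_of_isCoatom _ ?_
  have := (covBy_iff_coatom_Iic h.le).1 h
  exact ((Subobject.subobjectOrderIso B).symm.isCoatom_iff _).2 this

lemma prop_of_isNoetherianObject_of_isArtinianObject (P : ObjectProperty C) [P.ContainsZero]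
    [P.IsClosedUnderIsomorphisms] [P.IsClosedUnderExtensions]
    (simple : ∀ S : C, Simple S → P S) (X : C) [IsNoetherianObject X] [IsArtinianObject X] :
    P X := by
  obtain ⟨A, hA₀, n, hAn, hA⟩ :=
    exists_covBy_seq_of_wellFoundedLT_wellFoundedGT_of_le (bot_le : (⊥ : Subobject X) ≤ ⊤)
  have prop_A : ∀ m ≤ n, P (A m : C) := by
    intro m
    induction m with
    | zero =>
      intro _
      rw [hA₀]
      exact P.prop_of_iso Subobject.botCoeIsoZero.symm P.prop_zero
    | succ m ih =>
      intro hm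
      let i := (A m).ofLE (A (m + 1)) (hA m hm).le
      have exact_i : (ShortComplex.mk i (cokernel.π i) (cokernel.condition i)).ShortExact :=
        { exact := ShortComplex.exact_cokernel i }
      exact P.prop_X₂_of_shortExact exact_i (ih (by lia))
        (simple _ (simple_cokernel_ofLE_of_covBy (hA m hm)))
  have prop_top : P ((⊤ : Subobject X) : C) := hAn ▸ prop_A n le_rfl
  exact P.prop_of_iso (asIso (⊤ : Subobject X).arrow) prop_top

namespace HasFiniteLengthObj

variable {X : C}

lemma isNoetherianObject (h : HasFiniteLengthObj X) : IsNoetherianObject X := by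
  obtain ⟨N, hN⟩ := h
  exact (isNoetherianObject_iff_not_strictMono X).2 fun f hf ↦
    hN (fun j ↦ f j) (hf.comp Fin.val_strictMono)

lemma isArtinianObject (h : HasFiniteLengthObj X) : IsArtinianObject X := by
  obtain ⟨N, hN⟩ := h
  exact (isArtinianObject_iff_not_strictAnti X).2 fun f hf ↦
    hN (fun j ↦ f j.rev) ((hf.comp_strictMono Fin.val_strictMono).comp Fin.rev_strictAnti)

end HasFiniteLengthObj

end FiniteLength

section Semisimple

variable {C : Type*} [Category C] [Abelian C]

lemma isSemisimpleObj_of_simple (S : C) [Simple S] : IsSemisimpleObj S := by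
  let _ : HasFiniteBiproducts C := HasFiniteBiproducts.of_hasFiniteProducts
  exact ⟨1, fun _ ↦ S, fun _ ↦ inferInstance, ⟨(biproductUniqueIso fun _ : Fin 1 ↦ S).symm⟩⟩

lemma IsSemisimpleObj.exists_simple_retract {X : C} (h : IsSemisimpleObj X) (hX : ¬ IsZero X) :
    ∃ S : C, Simple S ∧ Nonempty (Retract S X) := by
  obtain ⟨n, S, simple, h⟩ := h
  let _ : HasFiniteBiproducts C := HasFiniteBiproducts.of_hasFiniteProducts
  obtain ⟨e⟩ : Nonempty (X ≅ ⨁ S) := h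
  obtain _ | n := n
  · have : 𝟙 (⨁ S) = 0 := biproduct.hom_ext _ _ (fun j ↦ j.elim0)
    exact absurd (((IsZero.iff_id_eq_zero _).2 this).of_iso e) hX
  · exact ⟨S 0, simple 0, ⟨{ i := biproduct.ι S 0 ≫ e.inv, r := e.hom ≫ biproduct.π S 0 }⟩⟩

lemma isIso_i_of_isIso_of_ne_zero {X Y : C} (h : Retract X Y) (hX : ¬ IsZero X)
    (isIso : ∀ e : Y ⟶ Y, e ≠ 0 → IsIso e) : IsIso h.i := by
  have ne_zero : h.r ≫ h.i ≠ 0 := by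
    intro h0
    refine hX ((IsZero.iff_id_eq_zero X).2 ?_)
    calc 𝟙 X = h.i ≫ (h.r ≫ h.i) ≫ h.r := by simp
      _ = 0 := by rw [h0, zero_comp, comp_zero]
  have := isIso _ ne_zero
  have : Epi h.i := epi_of_epi h.r h.i
  exact isIso_of_epi_of_isSplitMono h.i

lemma IsSemisimpleObj.simple {X : C} (h : IsSemisimpleObj X) (hX : ¬ IsZero X)
    (isIso : ∀ e : X ⟶ X, e ≠ 0 → IsIso e) : Simple X := by
  obtain ⟨S, _, ⟨r⟩⟩ := h.exists_simple_retract hX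
  have := isIso_i_of_isIso_of_ne_zero r (Simple.not_isZero S) isIso
  exact Simple.of_iso (asIso r.i).symm

end Semisimple

section EssImage

variable {C D : Type*} [Category C] [Category D] [Abelian C] [Abelian D] (F : C ⥤ D)
  [F.PreservesZeroMorphisms]

lemma essImage_containsZero : F.essImage.ContainsZero where
  exists_zero := by
    obtain ⟨Z, hZ⟩ := HasZeroObject.zero (C := C)
    exact ⟨F.obj Z, F.map_isZero hZ, F.obj_mem_essImage Z⟩

variable [F.Full] [F.Faithful]

lemma simple_obj_of_isSemisimpleObj_obj (S : C) [Simple S] (h : IsSemisimpleObj (F.obj S)) :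
    Simple (F.obj S) := by
  refine h.simple (fun hS ↦ id_nonzero S (F.map_injective (hS.eq_of_src _ _))) fun e he ↦ ?_
  obtain ⟨t, rfl⟩ := F.map_surjective e
  have : IsIso t := isIso_of_hom_simple fun ht ↦ he (by rw [ht, F.map_zero])
  infer_instance

variable [PreservesFiniteLimits F] [PreservesFiniteColimits F]

lemma subobjectCore_essImage_obj (simple : ∀ S : C, Simple S → IsSemisimpleObj (F.obj S))
    (X : C) [IsNoetherianObject X] [IsArtinianObject X] :
    subobjectCore F.essImage (F.obj X) := by
  have := essImage_containsZero F
  have := isClosedUnderKernels_of_isClosedUnderLimitsOfShape F.essImage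
  have := isClosedUnderCokernels_of_isClosedUnderColimitsOfShape F.essImage
  let P : ObjectProperty C := (subobjectCore F.essImage).inverseImage F
  have : P.IsClosedUnderExtensions :=
    ⟨fun {T} hT h₁ h₃ ↦ by
      have := hT.mono_f
      have := hT.epi_g
      exact subobjectCore.prop_X₂_of_shortExact (hT.map F) h₁ (F.obj_mem_essImage T.X₂) h₃⟩
  refine prop_of_isNoetherianObject_of_isArtinianObject P (fun S hS ↦ ?_) X
  have : Simple (F.obj S) := simple_obj_of_isSemisimpleObj_obj F S (simple S hS)
  exact subobjectCore.of_simple (F.obj_mem_essImage S)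

end EssImage

theorem essImage_closed_under_subquotients_general
    {C D : Type*} [Category C] [Category D] [Abelian C] [Abelian D]
    (F : C ⥤ D) [F.PreservesZeroMorphisms] [F.Full] [F.Faithful]
    [PreservesFiniteLimits F] [PreservesFiniteColimits F]
    (simple : ∀ S : C, Simple S → IsSemisimpleObj (F.obj S))
    (X : C) [IsNoetherianObject X] [IsArtinianObject X] :
    (∀ (Y : D) (f : Y ⟶ F.obj X), Mono f → F.essImage Y) ∧
    (∀ (Y : D) (g : F.obj X ⟶ Y), Epi g → F.essImage Y) := by
  have core := subobjectCore_essImage_obj F simple X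
  have := isClosedUnderCokernels_of_isClosedUnderColimitsOfShape F.essImage
  exact ⟨fun _ f _ ↦ core f, fun _ g _ ↦ subobjectCore.prop_of_epi g core⟩

/-- Stalder's lemma: an exact `k`-linear fully faithful functor between
abelian `k`-linear categories, all of whose source objects have finite length and
finite-dimensional endomorphism algebras, and which preserves semisimple objects, has
essential image closed under subobjects and quotients. -/
theorem essImage_closed_under_subquotients
    {k : Type*} [Field k]
    {C D : Type*} [Category C] [Category D] [Abelian C] [Abelian D]
    [Linear k C] [Linear k D]
    (F : C ⥤ D) [F.Additive] [F.Linear k] [F.Full] [F.Faithful]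
    [PreservesFiniteLimits F] [PreservesFiniteColimits F]
    (hlen : ∀ X : C, HasFiniteLengthObj X)
    (hend : ∀ X : C, FiniteDimensional k (X ⟶ X))
    (hss : ∀ X : C, IsSemisimpleObj X → IsSemisimpleObj (F.obj X)) :
    (∀ (X : C) (Y : D) (f : Y ⟶ F.obj X), Mono f → ∃ Z : C, Nonempty (Y ≅ F.obj Z)) ∧
    (∀ (X : C) (Y : D) (g : F.obj X ⟶ Y), Epi g → ∃ Z : C, Nonempty (Y ≅ F.obj Z)) := by
  have general (X : C) :=
    have := (hlen X).isNoetherianObject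
    have := (hlen X).isArtinianObject
    essImage_closed_under_subquotients_general F
      (fun S _ ↦ hss S (isSemisimpleObj_of_simple S)) X
  refine ⟨fun X Y f hf ↦ ?_, fun X Y g hg ↦ ?_⟩
  · obtain ⟨Z, ⟨e⟩⟩ := (general X).1 Y f hf
    exact ⟨Z, ⟨e.symm⟩⟩
  · obtain ⟨Z, ⟨e⟩⟩ := (general X).2 Y g hg
    exact ⟨Z, ⟨e.symm⟩⟩
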